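/- Let α be a composition, l = max{i : α_i ≠ 0}, and n = max{l, α_1, ..., α_l}. Then the Newton polytope of the key polynomial κ_α equals the Minkowski sum of Schubert matroid polytopes Σ_{j=1}^n P(SM_n(D(α)_j)), where D(α)_j = {i ≤ n : α_i ≥ j} are the columns of the skyline diagram of α. -/

import Mathlib

open Finset MvPolynomial Pointwise

/-- `DomLE R S`: `R` and `S` have the same cardinality and, for each `k`, the `k`-th least
element of `R` does not exceed the `k`-th least element of `S`.  The bases of the Schubert
matroid `SM_n(S)` are exactly the `B` with `DomLE B S`. -/
def DomLE {α : Type*} [LinearOrder α] (R S : Finset α) : Prop :=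
  R.card = S.card ∧
    ∀ (k : ℕ) (hR : k < (R.sort (· ≤ ·)).length) (hS : k < (S.sort (· ≤ ·)).length),
      (R.sort (· ≤ ·)).get ⟨k, hR⟩ ≤ (S.sort (· ≤ ·)).get ⟨k, hS⟩

/-- Indicator vector of a finite subset of `ℕ`. -/
def indVecNat (B : Finset ℕ) : ℕ → ℝ := fun i => if i ∈ B then 1 else 0

/-- Matroid polytope `P(SM_n(S))` of the Schubert matroid on ground set `{0, …, n-1} ⊆ ℕ`:
the convex hull of the indicator vectors of the bases, the `B ⊆ {0, …, n-1}` with `B ≤ S`. -/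
def smPolytopeNat (n : ℕ) (S : Finset ℕ) : Set (ℕ → ℝ) :=
  convexHull ℝ
    {x | ∃ B : Finset ℕ, B ⊆ Finset.range n ∧ DomLE B S ∧ x = indVecNat B}

/-- The Newton polytope of a polynomial in the variables `x_1, x_2, …`. -/
def newtonPolytopeNat (f : MvPolynomial ℕ ℤ) : Set (ℕ → ℝ) :=
  convexHull ℝ ((fun (d : ℕ →₀ ℕ) (i : ℕ) => ((d i : ℕ) : ℝ)) '' ↑f.support)

/-- Counting function of a finite set. -/
def cntS (B : Finset ℕ) (m : ℕ) : ℕ := Nat.count (· ∈ B) m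

lemma cntS_zero (B : Finset ℕ) : cntS B 0 = 0 := by simp [cntS]

lemma cntS_succ (B : Finset ℕ) (m : ℕ) :
    cntS B (m + 1) = cntS B m + if m ∈ B then 1 else 0 := by
  simp [cntS, Nat.count_succ]

lemma cntS_card {B : Finset ℕ} {n : ℕ} (h : B ⊆ Finset.range n) : cntS B n = B.card := by
  unfold cntS
  rw [Nat.count_eq_card_filter_range]
  congr 1
  ext x
  simp only [Finset.mem_filter]
  exact ⟨fun h => h.2, fun hx => ⟨h hx, hx⟩⟩

lemma sort_lt_iff (B : Finset ℕ) (k m : ℕ) (hk : k < (B.sort (· ≤ ·)).length) :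
    (B.sort (· ≤ ·)).get ⟨k, hk⟩ < m ↔ k < cntS B m := by
  have hf : (Set.ofPred (fun x => x ∈ B)).Finite := B.finite_toSet
  have hB : hf.toFinset = B := by ext x; simp
  have e : (B.sort (· ≤ ·)).get ⟨k, hk⟩ = Nat.nth (fun x => x ∈ B) k := by
    rw [Nat.nth_eq_getD_sort hf]
    simp only [hB]
    rw [List.getD_eq_getElem _ _ hk]
    rfl
  have hc : ∀ hf : (Set.ofPred (fun x => x ∈ B)).Finite, k < #hf.toFinset := by
    intro hf'
    have : hf'.toFinset = B := by ext x; simp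
    rw [this]; simpa using hk
  rw [e]
  constructor
  · intro h
    have h1 := Nat.count_nth_succ hc
    have h2 := Nat.count_monotone (fun x => x ∈ B) (Nat.succ_le_of_lt h)
    unfold cntS
    simp only [Nat.succ_eq_add_one] at h2
    omega
  · intro h
    exact Nat.nth_lt_of_lt_count h

lemma domLE_iff (B S : Finset ℕ) :
    DomLE B S ↔ B.card = S.card ∧ ∀ m, cntS S m ≤ cntS B m := by
  unfold DomLE
  refine and_congr_right fun hc => ⟨fun h m => ?_, fun h k hR hS => ?_⟩
  · by_contra hlt
    push Not at hlt
    have h0 : cntS S m ≤ S.card := by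
      have := Nat.count_le_card (p := fun x => x ∈ S) (S.finite_toSet) m
      have hB : (S.finite_toSet).toFinset = S := by ext x; simp
      have h2 : (Set.Finite.toFinset (s := Set.ofPred (fun x => x ∈ S)) S.finite_toSet) = S := by
        ext x; simp
      rw [h2] at this
      exact this
    have hS : cntS B m < (S.sort (· ≤ ·)).length := by
      simp; omega
    have hR : cntS B m < (B.sort (· ≤ ·)).length := by
      simp; omega
    have h1 := h _ hR hS
    have h2 := (sort_lt_iff S _ m hS).2 hlt
    have h3 := (sort_lt_iff B _ m hR).1 (lt_of_le_of_lt h1 h2)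
    omega
  · have h1 := (sort_lt_iff S k _ hS).1 (Nat.lt_succ_self _)
    have h2 := (sort_lt_iff B k _ hR).2 (lt_of_lt_of_le h1 (h _))
    exact Nat.le_of_lt_succ h2

lemma domLE_iff' {n : ℕ} {B S : Finset ℕ} (hB : B ⊆ Finset.range n) (hS : S ⊆ Finset.range n) :
    DomLE B S ↔ cntS S n = cntS B n ∧ ∀ m, cntS S m ≤ cntS B m := by
  rw [domLE_iff, cntS_card hB, cntS_card hS, eq_comm]

lemma cntS_swap {B : Finset ℕ} {a b : ℕ} (ha : a ∉ B) (hb : b ∈ B) (m : ℕ) :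
    cntS (insert a (B.erase b)) m + (if b < m then 1 else 0) =
      cntS B m + if a < m then 1 else 0 := by
  have hab : a ≠ b := fun h => ha (h ▸ hb)
  induction m with
  | zero => simp [cntS_zero]
  | succ m ih =>
    rw [cntS_succ, cntS_succ]
    by_cases h1 : m = a
    · subst h1
      simp only [Finset.mem_insert, true_or, if_true, ha, if_false]
      grind
    · by_cases h2 : m = b
      · subst h2
        simp only [Finset.mem_insert, Finset.mem_erase, hb, if_true]
        grind
      · simp only [Finset.mem_insert, Finset.mem_erase, h1, h2, false_or, ne_eq, not_false_eq_true,
          true_and]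
        grind

lemma cntS_mono_diff {D D' : Finset ℕ} {p q : ℕ} (hpq : p ≤ q)
    (h : ∀ x, p ≤ x → x < q → x ∈ D' → x ∈ D) :
    cntS D' q + cntS D p ≤ cntS D q + cntS D' p := by
  induction q, hpq using Nat.le_induction with
  | base => omega
  | succ q hq ih =>
    have h1 := ih (fun x hx hx' => h x hx (by omega))
    have h2 := h q hq (by omega)
    rw [cntS_succ, cntS_succ]
    split_ifs <;> first | omega | tauto

lemma cntS_lt_diff {D D' : Finset ℕ} {p q a : ℕ} (hpa : p ≤ a) (haq : a < q)
    (h : ∀ x, p ≤ x → x < q → x ∈ D' → x ∈ D) (ha : a ∈ D) (ha' : a ∉ D') :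
    cntS D' q + cntS D p < cntS D q + cntS D' p := by
  have h1 := cntS_mono_diff hpa (fun x hx hx' => h x hx (by omega))
  have h2 := cntS_mono_diff (p := a + 1) haq (fun x hx hx' => h x (by omega) hx')
  rw [cntS_succ, cntS_succ] at h2
  simp [ha, ha'] at h2
  omega

lemma exchange {n a : ℕ} {B B' D D' : Finset ℕ} (hBn : B ⊆ Finset.range n)
    (hBn' : B' ⊆ Finset.range n) (hD : D' ⊆ D)
    (h1 : cntS D n = cntS B n) (h2 : ∀ m, cntS D m ≤ cntS B m)
    (h1' : cntS D' n = cntS B' n) (h2' : ∀ m, cntS D' m ≤ cntS B' m)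
    (ha' : a ∈ B') (ha : a ∉ B) :
    ∃ b ∈ B, b ∉ B' ∧
      (cntS D n = cntS (insert a (B.erase b)) n ∧
        ∀ m, cntS D m ≤ cntS (insert a (B.erase b)) m) ∧
      (cntS D' n = cntS (insert b (B'.erase a)) n ∧
        ∀ m, cntS D' m ≤ cntS (insert b (B'.erase a)) m) := by
  have han : a < n := Finset.mem_range.1 (hBn' ha')
  by_contra hno
  push Not at hno
  have hex : ∃ m, a < m ∧ cntS D' m = cntS B' m := ⟨n, han, h1'⟩
  classical
  obtain ⟨m, ⟨ham, hm⟩, hmin⟩ : ∃ m, (a < m ∧ cntS D' m = cntS B' m) ∧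
      ∀ k < m, ¬ (a < k ∧ cntS D' k = cntS B' k) :=
    ⟨Nat.find hex, Nat.find_spec hex, fun k hk => Nat.find_min hex hk⟩
  have hc1 : ∀ x, a < x → x < m → x ∈ B → x ∈ B' := by
    intro x hax hxm hxB
    by_contra hxB'
    have hxn : x < n := Finset.mem_range.1 (hBn hxB)
    have s1 := cntS_swap ha hxB
    have s2 := cntS_swap hxB' ha'
    obtain ⟨k, hk⟩ := hno x hxB hxB' ⟨by have := s1 n; simp [hxn, han] at this; omega,
      fun k => by have := s1 k; have := h2 k; split_ifs at * <;> omega⟩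
      (by have := s2 n; simp [hxn, han] at this; omega)
    have := s2 k
    have := h2' k
    have := hmin k
    split_ifs at * <;> omega
  obtain ⟨p, hpa, hp, hmax⟩ : ∃ p, p ≤ a ∧ cntS D p = cntS B p ∧
      ∀ k, p < k → k ≤ a → ¬ cntS D k = cntS B k := by
    refine ⟨Nat.findGreatest (fun k => cntS D k = cntS B k) a, Nat.findGreatest_le _, ?_, ?_⟩
    · exact Nat.findGreatest_spec (P := fun k => cntS D k = cntS B k) (Nat.zero_le a)
        (by simp [cntS_zero])
    · intro k hk hka
      exact Nat.findGreatest_is_greatest (P := fun k => cntS D k = cntS B k) hk hka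
  have hc2 : ∀ x, p ≤ x → x < a → x ∈ B → x ∈ B' := by
    intro x hpx hxa hxB
    by_contra hxB'
    have hxn : x < n := Finset.mem_range.1 (hBn hxB)
    have s1 := cntS_swap ha hxB
    have s2 := cntS_swap hxB' ha'
    have : ∀ k, cntS D k ≤ cntS (insert a (B.erase x)) k := by
      intro k
      have := s1 k
      have := h2 k
      have := hmax k
      split_ifs at * <;> omega
    obtain ⟨k, hk⟩ := hno x hxB hxB' ⟨by have := s1 n; simp [hxn, han] at this; omega, this⟩
      (by have := s2 n; simp [hxn, han] at this; omega)
    have := s2 k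
    have := h2' k
    split_ifs at * <;> omega
  have e1 := cntS_lt_diff (D := B') (D' := B) hpa ham (fun x hx hx' hxB => by
    rcases lt_trichotomy x a with h | h | h
    · exact hc2 x hx h hxB
    · exact absurd (h ▸ hxB) ha
    · exact hc1 x h hx' hxB) ha' ha
  have e2 := cntS_mono_diff (D := D) (D' := D') (hpa.trans ham.le) (fun x _ _ hx => hD hx)
  have := h2 m
  have := h2' p
  omega

/-- Number of positions `k < m` with `j < a k`. -/
def cnt (a : ℕ →₀ ℕ) (j m : ℕ) : ℕ := Nat.count (fun k => j < a k) m

lemma cnt_succ (a : ℕ →₀ ℕ) (j m : ℕ) :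
    cnt a j (m + 1) = cnt a j m + if j < a m then 1 else 0 := by
  simp [cnt, Nat.count_succ]

/-- The compositions below `α`, by the tableau criterion. -/
def Qs (n : ℕ) (α β : ℕ →₀ ℕ) : Prop :=
  (∀ k, n ≤ k → β k = 0) ∧ (∀ j m, cnt α j m ≤ cnt β j m) ∧ ∀ j, cnt α j n = cnt β j n

/-- Exponent vector as a real vector. -/
def vec (d : ℕ →₀ ℕ) : ℕ → ℝ := fun i => ((d i : ℕ) : ℝ)

lemma cntS_eq_cnt (a : ℕ →₀ ℕ) (B : Finset ℕ) (j m : ℕ) (h : ∀ k, k ∈ B ↔ j < a k) :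
    cntS B m = cnt a j m := by
  unfold cntS cnt
  congr 1
  ext k
  exact h k

/-- Column of a composition. -/
def col (n : ℕ) (a : ℕ →₀ ℕ) (j : ℕ) : Finset ℕ := (Finset.range n).filter fun i => j + 1 ≤ a i

lemma mem_col {n : ℕ} {a : ℕ →₀ ℕ} (ha : ∀ k, n ≤ k → a k = 0) (j k : ℕ) :
    k ∈ col n a j ↔ j < a k := by
  simp only [col, Finset.mem_filter, Finset.mem_range]
  constructor
  · intro h; omega
  · intro h
    refine ⟨?_, h⟩
    by_contra hk
    have := ha k (by omega)
    omega

/-- Vertex candidates for one matroid polytope. -/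
def vert (n : ℕ) (S : Finset ℕ) : Set (ℕ → ℝ) :=
  {x | ∃ B : Finset ℕ, B ⊆ Finset.range n ∧ DomLE B S ∧ x = indVecNat B}

lemma vert_finite (n : ℕ) (S : Finset ℕ) : (vert n S).Finite := by
  refine Set.Finite.subset ((Finset.range n).powerset.finite_toSet.image indVecNat) ?_
  rintro x ⟨B, hB, _, rfl⟩
  exact ⟨B, Finset.mem_coe.2 (Finset.mem_powerset.2 hB), rfl⟩

lemma Qs_le {n : ℕ} {α β : ℕ →₀ ℕ} (hαn : ∀ k, α k ≤ n) (hβ : Qs n α β) (k : ℕ) : β k ≤ n := by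
  by_contra hk
  push Not at hk
  have hkn : k < n := by
    by_contra h
    have := hβ.1 k (by omega)
    omega
  have h1 := hβ.2.2 n
  have h2 : cnt α n n = 0 := by
    unfold cnt
    rw [Nat.count_iff_forall_not]
    intro m _
    have := hαn m
    omega
  have h3 : cnt β n n ≠ 0 := by
    unfold cnt
    rw [Ne, Nat.count_iff_forall_not]
    intro h
    exact h _ hkn hk
  omega

lemma vec_mem_sum {n : ℕ} {α β : ℕ →₀ ℕ} (hα : ∀ k, n ≤ k → α k = 0) (hαn : ∀ k, α k ≤ n)
    (hβ : Qs n α β) : vec β ∈ ∑ j ∈ Finset.range n, vert n (col n α j) := by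
  rw [Set.mem_finsetSum]
  refine ⟨fun j => indVecNat (col n β j), ?_, ?_⟩
  · intro j _
    refine ⟨col n β j, Finset.filter_subset _ _, ?_, rfl⟩
    refine (domLE_iff' (n := n) (B := col n β j) (S := col n α j) (Finset.filter_subset _ _) (Finset.filter_subset _ _)).2 ?_
    simp only [cntS_eq_cnt α _ j _ (mem_col hα j), cntS_eq_cnt β _ j _ (mem_col hβ.1 j)]
    exact ⟨hβ.2.2 j, hβ.2.1 j⟩
  · ext k
    simp only [Finset.sum_apply, indVecNat, vec, mem_col hβ.1]
    rw [Finset.sum_boole]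
    congr 1
    have : (Finset.range n).filter (fun j => j < β k) = Finset.range (β k) := by
      ext j
      simp only [Finset.mem_filter, Finset.mem_range]
      have := Qs_le hαn hβ k
      omega
    rw [this, Finset.card_range]

lemma extreme_mem {n : ℕ} {α : ℕ →₀ ℕ} (hα : ∀ k, n ≤ k → α k = 0) (hαn : ∀ k, α k ≤ n)
    {x : ℕ → ℝ}
    (hx : x ∈ (convexHull ℝ (∑ j ∈ Finset.range n, vert n (col n α j))).extremePoints ℝ) :
    ∃ β, Qs n α β ∧ vec β = x := by
  classical
  have hxE := extremePoints_convexHull_subset hx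
  rw [mem_extremePoints] at hx
  rw [Set.mem_finsetSum] at hxE
  obtain ⟨g, hg, rfl⟩ := hxE
  have hg' : ∀ j, ∃ B : Finset ℕ, j < n →
      B ⊆ Finset.range n ∧ DomLE B (col n α j) ∧ g j = indVecNat B := by
    intro j
    by_cases hj : j < n
    · obtain ⟨B, hB⟩ := hg (Finset.mem_range.2 hj)
      exact ⟨B, fun _ => hB⟩
    · exact ⟨∅, fun h => absurd h hj⟩
  choose B hB using hg'
  have hdom : ∀ j, j < n → cntS (col n α j) n = cntS (B j) n ∧
      ∀ m, cntS (col n α j) m ≤ cntS (B j) m := fun j hj =>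
    (domLE_iff' (hB j hj).1 (Finset.filter_subset _ _)).1 (hB j hj).2.1
  have hupd : ∀ j, j < n → ∀ C : Finset ℕ, C ⊆ Finset.range n → DomLE C (col n α j) →
      (∑ i ∈ Finset.range n, g i) - indVecNat (B j) + indVecNat C ∈
        convexHull ℝ (∑ j ∈ Finset.range n, vert n (col n α j)) := by
    intro j hj C hC hCd
    apply subset_convexHull
    rw [Set.mem_finsetSum]
    refine ⟨Function.update g j (indVecNat C), ?_, ?_⟩
    · intro i hi
      by_cases hij : i = j
      · subst hij
        rw [Function.update_self]
        exact ⟨C, hC, hCd, rfl⟩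
      · rw [Function.update_of_ne hij]
        exact hg hi
    · rw [Finset.sum_update_of_mem (Finset.mem_range.2 hj),
        ← Finset.sum_sdiff (Finset.singleton_subset_iff.2 (Finset.mem_range.2 hj)),
        Finset.sum_singleton, (hB j hj).2.2]
      abel
  have hnest : ∀ j j', j < j' → j' < n → B j' ⊆ B j := by
    intro j j' hjj hj' a ha'
    by_contra ha
    have hj : j < n := by omega
    obtain ⟨b, hbB, hbB', e1, e2⟩ := exchange (hB j hj).1 (hB j' hj').1
      (D := col n α j) (D' := col n α j')
      (fun k hk => by rw [mem_col hα] at hk ⊢; omega)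
      (hdom j hj).1 (hdom j hj).2 (hdom j' hj').1 (hdom j' hj').2 ha' ha
    have hab : a ≠ b := fun h => ha (h ▸ hbB)
    have s1 : insert a ((B j).erase b) ⊆ Finset.range n :=
      Finset.insert_subset ((hB j' hj').1 ha') ((Finset.erase_subset _ _).trans (hB j hj).1)
    have s2 : insert b ((B j').erase a) ⊆ Finset.range n :=
      Finset.insert_subset ((hB j hj).1 hbB) ((Finset.erase_subset _ _).trans (hB j' hj').1)
    have m1 := hupd j hj _ s1 ((domLE_iff' s1 (Finset.filter_subset _ _)).2 e1)
    have m2 := hupd j' hj' _ s2 ((domLE_iff' s2 (Finset.filter_subset _ _)).2 e2)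
    have key := (hx.2 _ m1 _ m2 ⟨1 / 2, 1 / 2, by norm_num, by norm_num, by norm_num, by
      ext k
      simp only [Pi.add_apply, Pi.sub_apply, Pi.smul_apply, smul_eq_mul, indVecNat,
        Finset.mem_insert, Finset.mem_erase]
      by_cases hka : k = a
      · subst hka
        simp [ha, ha', hab]
        ring
      · by_cases hkb : k = b
        · subst hkb
          simp [hbB, hbB', hka]
          ring
        · simp [hka, hkb]
          ring⟩).1
    have := congrFun key a
    simp [indVecNat, ha] at this
  have hmem : ∀ k j, j < n → (j < ((Finset.range n).filter fun j => k ∈ B j).card ↔ k ∈ B j) := by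
    intro k j hj
    constructor
    · intro h
      by_contra hk
      have : ((Finset.range n).filter fun j => k ∈ B j) ⊆ Finset.range j := by
        intro i hi
        simp only [Finset.mem_filter, Finset.mem_range] at hi ⊢
        by_contra hij
        rcases eq_or_lt_of_le (not_lt.1 hij) with h | h
        · exact hk (h ▸ hi.2)
        · exact hk (hnest j i h hi.1 hi.2)
      have := Finset.card_le_card this
      rw [Finset.card_range] at this
      omega
    · intro hk
      have : Finset.range (j + 1) ⊆ ((Finset.range n).filter fun j => k ∈ B j) := by
        intro i hi
        simp only [Finset.mem_filter, Finset.mem_range] at hi ⊢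
        refine ⟨by omega, ?_⟩
        rcases eq_or_lt_of_le (Nat.le_of_lt_succ hi) with h | h
        · exact h ▸ hk
        · exact hnest i j h hj hk
      have := Finset.card_le_card this
      rw [Finset.card_range] at this
      omega
  let β : ℕ →₀ ℕ := Finsupp.onFinset (Finset.range n)
    (fun k => ((Finset.range n).filter fun j => k ∈ B j).card) (by
      intro k hk
      obtain ⟨j, hj⟩ := Finset.card_pos.1 (Nat.pos_of_ne_zero hk)
      simp only [Finset.mem_filter, Finset.mem_range] at hj
      exact (hB j hj.1).1 hj.2)
  have hβ : ∀ k, β k = ((Finset.range n).filter fun j => k ∈ B j).card := fun k => rfl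
  have hβn : ∀ k, β k ≤ n := by
    intro k
    rw [hβ]
    simpa using Finset.card_filter_le (Finset.range n) (fun j => k ∈ B j)
  have hcnt : ∀ j m, j < n → cntS (B j) m = cnt β j m := by
    intro j m hj
    refine cntS_eq_cnt β _ j m fun k => ?_
    rw [hβ, hmem k j hj]
  have hzero : ∀ a : ℕ →₀ ℕ, (∀ k, a k ≤ n) → ∀ j m, n ≤ j → cnt a j m = 0 := by
    intro a ha j m hj
    unfold cnt
    rw [Nat.count_iff_forall_not]
    intro k _
    have := ha k
    omega
  refine ⟨β, ⟨?_, ?_, ?_⟩, ?_⟩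
  · intro k hk
    by_contra h
    have := Finsupp.support_onFinset_subset (Finsupp.mem_support_iff.2 h)
    simp at this
    omega
  · intro j m
    by_cases hj : j < n
    · rw [← hcnt j m hj, ← cntS_eq_cnt α _ j _ (mem_col hα j)]
      exact (hdom j hj).2 m
    · rw [hzero α hαn j m (by omega)]
      omega
  · intro j
    by_cases hj : j < n
    · rw [← hcnt j n hj, ← cntS_eq_cnt α _ j _ (mem_col hα j)]
      exact (hdom j hj).1
    · rw [hzero α hαn j n (by omega), hzero β hβn j n (by omega)]
  · ext k
    simp only [vec, hβ, Finset.sum_apply]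
    rw [← Finset.sum_boole]
    refine Finset.sum_congr rfl fun j hj => ?_
    rw [(hB j (Finset.mem_range.1 hj)).2.2]
    rfl

lemma minkowski {n : ℕ} {α : ℕ →₀ ℕ} (hα : ∀ k, n ≤ k → α k = 0) (hαn : ∀ k, α k ≤ n) :
    convexHull ℝ (vec '' {β | Qs n α β}) =
      ∑ j ∈ Finset.range n, convexHull ℝ (vert n (col n α j)) := by
  rw [← convexHull_sum]
  have hfin : (∑ j ∈ Finset.range n, vert n (col n α j)).Finite :=
    Finset.sum_induction _ Set.Finite (fun _ _ => Set.Finite.add) (Set.finite_singleton 0)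
      fun j _ => vert_finite _ _
  have hsub : vec '' {β | Qs n α β} ⊆ ∑ j ∈ Finset.range n, vert n (col n α j) := by
    rintro _ ⟨β, hβ, rfl⟩
    exact vec_mem_sum hα hαn hβ
  apply subset_antisymm
  · exact convexHull_mono hsub
  · rw [← closure_convexHull_extremePoints (hfin.isCompact_convexHull ℝ) (convex_convexHull ℝ _)]
    refine closure_minimal (convexHull_mono ?_) ((hfin.subset hsub).isClosed_convexHull ℝ)
    intro x hx
    exact extreme_mem hα hαn hx

/-- Swap of adjacent entries. -/
def sw (i : ℕ) (a : ℕ →₀ ℕ) : ℕ →₀ ℕ := Finsupp.equivMapDomain (Equiv.swap i (i + 1)) a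

lemma sw_left (i : ℕ) (a : ℕ →₀ ℕ) : sw i a i = a (i + 1) := by
  simp [sw, Finsupp.equivMapDomain_apply]

lemma sw_right (i : ℕ) (a : ℕ →₀ ℕ) : sw i a (i + 1) = a i := by
  simp [sw, Finsupp.equivMapDomain_apply]

lemma sw_of_ne {i k : ℕ} (a : ℕ →₀ ℕ) (h : k ≠ i) (h' : k ≠ i + 1) : sw i a k = a k := by
  simp [sw, Finsupp.equivMapDomain_apply, Equiv.swap_apply_of_ne_of_ne h h']

lemma sw_sw (i : ℕ) (a : ℕ →₀ ℕ) : sw i (sw i a) = a := by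
  ext k
  by_cases h : k = i
  · subst h; rw [sw_left, sw_right]
  · by_cases h' : k = i + 1
    · subst h'; rw [sw_right, sw_left]
    · rw [sw_of_ne _ h h', sw_of_ne _ h h']

/-- Points on a string. -/
noncomputable def pt (i : ℕ) (a : ℕ →₀ ℕ) (s k : ℕ) : ℕ →₀ ℕ := (a.update i k).update (i + 1) (s - k)

lemma pt_left (i : ℕ) (a : ℕ →₀ ℕ) (s k : ℕ) : pt i a s k i = k := by
  simp [pt, Finsupp.update_apply]

lemma pt_right (i : ℕ) (a : ℕ →₀ ℕ) (s k : ℕ) : pt i a s k (i + 1) = s - k := by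
  simp [pt, Finsupp.update_apply]

lemma pt_of_ne {i j : ℕ} (a : ℕ →₀ ℕ) (s k : ℕ) (h : j ≠ i) (h' : j ≠ i + 1) :
    pt i a s k j = a j := by
  simp [pt, Finsupp.update_apply, h, h']

lemma ext_at {a b : ℕ →₀ ℕ} (i : ℕ) (h1 : a i = b i) (h2 : a (i + 1) = b (i + 1))
    (h3 : ∀ j, j ≠ i → j ≠ i + 1 → a j = b j) : a = b := by
  ext j
  by_cases h : j = i
  · rw [h, h1]
  · by_cases h' : j = i + 1
    · rw [h', h2]
    · exact h3 j h h'

lemma pt_self (i : ℕ) (a : ℕ →₀ ℕ) : pt i a (a i + a (i + 1)) (a i) = a := by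
  apply ext_at i
  · rw [pt_left]
  · rw [pt_right]; omega
  · intro j h h'; rw [pt_of_ne _ _ _ h h']

lemma pt_sw (i : ℕ) (a : ℕ →₀ ℕ) : pt i a (a i + a (i + 1)) (a (i + 1)) = sw i a := by
  apply ext_at i
  · rw [pt_left, sw_left]
  · rw [pt_right, sw_right]; omega
  · intro j h h'; rw [pt_of_ne _ _ _ h h', sw_of_ne _ h h']

lemma pt_inj (i : ℕ) (a : ℕ →₀ ℕ) (s k k' : ℕ) : pt i a s k = pt i a s k' ↔ k = k' := by
  constructor
  · intro h
    have := DFunLike.congr_fun h i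
    rwa [pt_left, pt_left] at this
  · rintro rfl; rfl

lemma X_mul_pt_left (i : ℕ) (a : ℕ →₀ ℕ) (s k : ℕ) :
    (X i * monomial (pt i a s k) 1 : MvPolynomial ℕ ℤ) = monomial (pt i a (s + 1) (k + 1)) 1 := by
  rw [X, monomial_mul, one_mul]
  congr 2
  apply ext_at i
  · simp [pt_left]; omega
  · simp [pt_right]
  · intro j h h'
    simp [pt_of_ne _ _ _ h h', Finsupp.single_apply, h.symm]

lemma X_mul_pt_right (i : ℕ) (a : ℕ →₀ ℕ) (s k : ℕ) (hk : k ≤ s) :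
    (X (i + 1) * monomial (pt i a s k) 1 : MvPolynomial ℕ ℤ) = monomial (pt i a (s + 1) k) 1 := by
  rw [X, monomial_mul, one_mul]
  congr 2
  apply ext_at i
  · simp [pt_left]
  · simp [pt_right]; omega
  · intro j h h'
    simp [pt_of_ne _ _ _ h h', Finsupp.single_apply, h'.symm]

lemma telescope (i : ℕ) (a : ℕ →₀ ℕ) (s u v : ℕ) (huv : u ≤ v) (hv : v ≤ s + 1) :
    ((X i - X (i + 1)) * ∑ k ∈ Finset.Ico u v, monomial (pt i a s k) 1 : MvPolynomial ℕ ℤ) =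
      monomial (pt i a (s + 1) v) 1 - monomial (pt i a (s + 1) u) 1 := by
  rw [← Finset.sum_Ico_sub (fun k => (monomial (pt i a (s + 1) k) 1 : MvPolynomial ℕ ℤ)) huv,
    Finset.mul_sum]
  refine Finset.sum_congr rfl fun k hk => ?_
  rw [Finset.mem_Ico] at hk
  rw [sub_mul, X_mul_pt_left, X_mul_pt_right _ _ _ _ (by omega)]

lemma coeff_string (i : ℕ) (a : ℕ →₀ ℕ) (s u v k : ℕ) :
    coeff (pt i a s k) (∑ k ∈ Finset.Ico u v, monomial (pt i a s k) 1 : MvPolynomial ℕ ℤ) =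
      if u ≤ k ∧ k < v then 1 else 0 := by
  rw [coeff_sum]
  simp only [coeff_monomial, pt_inj]
  simp

lemma mem_support_string {i : ℕ} {a : ℕ →₀ ℕ} {s u v : ℕ} {d : ℕ →₀ ℕ}
    (h : coeff d (∑ k ∈ Finset.Ico u v, monomial (pt i a s k) 1 : MvPolynomial ℕ ℤ) ≠ 0) :
    ∃ k, u ≤ k ∧ k < v ∧ d = pt i a s k := by
  rw [coeff_sum] at h
  obtain ⟨k, hk, hne⟩ := Finset.exists_ne_zero_of_sum_ne_zero h
  rw [Finset.mem_Ico] at hk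
  rw [coeff_monomial] at hne
  refine ⟨k, hk.1, hk.2, ?_⟩
  by_contra hd
  exact hne (if_neg fun h => hd h.symm)

lemma exists_T (i : ℕ) (a : ℕ →₀ ℕ) : ∃ T : MvPolynomial ℕ ℤ,
    (X i - X (i + 1)) * T =
      X i * monomial a 1 - rename (Equiv.swap i (i + 1)) (X i * monomial a 1) ∧
    (∀ d, coeff d T ≠ 0 → ∃ k, min (a i) (a (i + 1)) ≤ k ∧ k ≤ max (a i) (a (i + 1)) ∧
      d = pt i a (a i + a (i + 1)) k) ∧
    coeff a T = (if a (i + 1) ≤ a i then 1 else 0) ∧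
    coeff (sw i a) T = (if a (i + 1) ≤ a i then 1 else 0) := by
  have e1 : (X i * monomial a 1 : MvPolynomial ℕ ℤ) =
      monomial (pt i a (a i + a (i + 1) + 1) (a i + 1)) 1 := by
    conv_lhs => rw [← pt_self i a]
    rw [X_mul_pt_left]
  have e2 : rename (Equiv.swap i (i + 1)) (X i * monomial a 1 : MvPolynomial ℕ ℤ) =
      monomial (pt i a (a i + a (i + 1) + 1) (a (i + 1))) 1 := by
    rw [map_mul, rename_X, rename_monomial, ← Finsupp.equivMapDomain_eq_mapDomain,
      Equiv.swap_apply_left]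
    change X (i + 1) * monomial (sw i a) 1 = _
    rw [← pt_sw, X_mul_pt_right _ _ _ _ (by omega)]
  have ca : ∀ u v, coeff a (∑ k ∈ Finset.Ico u v,
      monomial (pt i a (a i + a (i + 1)) k) 1 : MvPolynomial ℕ ℤ) =
      if u ≤ a i ∧ a i < v then 1 else 0 := by
    intro u v
    rw [← coeff_string i a (a i + a (i + 1)) u v (a i), pt_self]
  have cs : ∀ u v, coeff (sw i a) (∑ k ∈ Finset.Ico u v,
      monomial (pt i a (a i + a (i + 1)) k) 1 : MvPolynomial ℕ ℤ) =
      if u ≤ a (i + 1) ∧ a (i + 1) < v then 1 else 0 := by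
    intro u v
    rw [← coeff_string i a (a i + a (i + 1)) u v (a (i + 1)), pt_sw]
  rw [e2, e1]
  by_cases h : a (i + 1) ≤ a i
  · refine ⟨∑ k ∈ Finset.Ico (a (i + 1)) (a i + 1), monomial (pt i a (a i + a (i + 1)) k) 1,
      ?_, ?_, ?_, ?_⟩
    · rw [telescope _ _ _ _ _ (by omega) (by omega)]
    · intro d hd
      obtain ⟨k, h1, h2, h3⟩ := mem_support_string hd
      exact ⟨k, by omega, by omega, h3⟩
    · rw [ca]; simp [h]
    · rw [cs]; simp [h, Nat.lt_succ_iff]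
  · refine ⟨-∑ k ∈ Finset.Ico (a i + 1) (a (i + 1)), monomial (pt i a (a i + a (i + 1)) k) 1,
      ?_, ?_, ?_, ?_⟩
    · rw [mul_neg, telescope _ _ _ _ _ (by omega) (by omega)]
      ring
    · intro d hd
      rw [coeff_neg, neg_ne_zero] at hd
      obtain ⟨k, h1, h2, h3⟩ := mem_support_string hd
      exact ⟨k, by omega, by omega, h3⟩
    · rw [coeff_neg, ca]; simp [h]
    · rw [coeff_neg, cs]; simp [h]

/-- Squared norm. -/
def nsq (n : ℕ) (a : ℕ →₀ ℕ) : ℕ := ∑ k ∈ Finset.range n, a k ^ 2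

lemma nsq_split {n i : ℕ} (hi : i + 1 < n) (a : ℕ →₀ ℕ) :
    nsq n a = ∑ k ∈ Finset.range n \ {i, i + 1}, a k ^ 2 + (a i ^ 2 + a (i + 1) ^ 2) := by
  unfold nsq
  rw [← Finset.sum_sdiff (s₁ := {i, i + 1}) (s₂ := Finset.range n)]
  · rw [Finset.sum_pair (by omega)]
  · intro k hk
    simp only [Finset.mem_insert, Finset.mem_singleton, Finset.mem_range] at hk ⊢
    omega

lemma nsq_congr {n i : ℕ} {a b : ℕ →₀ ℕ} (h : ∀ j, j ≠ i → j ≠ i + 1 → a j = b j) :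
    ∑ k ∈ Finset.range n \ {i, i + 1}, a k ^ 2 = ∑ k ∈ Finset.range n \ {i, i + 1}, b k ^ 2 := by
  refine Finset.sum_congr rfl fun k hk => ?_
  simp only [Finset.mem_sdiff, Finset.mem_insert, Finset.mem_singleton, not_or] at hk
  rw [h k hk.2.1 hk.2.2]

lemma nsq_sw {n i : ℕ} (hi : i + 1 < n) (a : ℕ →₀ ℕ) : nsq n (sw i a) = nsq n a := by
  rw [nsq_split hi, nsq_split hi a, nsq_congr (fun j h h' => sw_of_ne a h h'), sw_left, sw_right]
  ring

lemma nsq_pt {n i : ℕ} (hi : i + 1 < n) (a : ℕ →₀ ℕ) {k : ℕ}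
    (h1 : min (a i) (a (i + 1)) ≤ k) (h2 : k ≤ max (a i) (a (i + 1))) :
    nsq n (pt i a (a i + a (i + 1)) k) ≤ nsq n a ∧
      (nsq n a ≤ nsq n (pt i a (a i + a (i + 1)) k) → k = a i ∨ k = a (i + 1)) := by
  rw [nsq_split hi, nsq_split hi a, nsq_congr (fun j h h' => pt_of_ne a _ k h h'), pt_left,
    pt_right]
  generalize a i = p at *
  generalize a (i + 1) = q at *
  obtain ⟨r, hr⟩ : ∃ r, p + q - k = r := ⟨_, rfl⟩
  have hr' : r + k = p + q := by omega
  rw [hr]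
  generalize ∑ k ∈ Finset.range n \ {i, i + 1}, a k ^ 2 = S
  have key : (p : ℤ) ^ 2 + q ^ 2 - (k ^ 2 + r ^ 2) = 2 * ((k - p) * (q - k)) := by
    have : (r : ℤ) = p + q - k := by omega
    rw [this]; ring
  have hnn : (0 : ℤ) ≤ (k - p) * (q - k) := by
    rcases le_total p q with h | h
    · apply mul_nonneg <;> omega
    · apply mul_nonneg_of_nonpos_of_nonpos <;> omega
  constructor
  · zify; linarith
  · intro h
    zify at h
    have : ((k : ℤ) - p) * (q - k) = 0 := by linarith
    rcases mul_eq_zero.1 this with h | h <;> omega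

/-- Sorting two adjacent entries. -/
def up (i : ℕ) (a : ℕ →₀ ℕ) : ℕ →₀ ℕ := if a i < a (i + 1) then sw i a else a

lemma coeff_T {n i : ℕ} (hi : i + 1 < n) (a β : ℕ →₀ ℕ) (hab : nsq n a ≤ nsq n β)
    {T : MvPolynomial ℕ ℤ}
    (hT1 : ∀ d, coeff d T ≠ 0 → ∃ k, min (a i) (a (i + 1)) ≤ k ∧ k ≤ max (a i) (a (i + 1)) ∧
      d = pt i a (a i + a (i + 1)) k)
    (hT2 : coeff a T = (if a (i + 1) ≤ a i then 1 else 0))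
    (hT3 : coeff (sw i a) T = (if a (i + 1) ≤ a i then 1 else 0)) :
    coeff β T = if a = up i β then 1 else 0 := by
  by_cases h1 : β = a
  · subst h1
    rw [hT2]
    unfold up
    by_cases h : β (i + 1) ≤ β i
    · simp [h, not_lt.2 h]
    · rw [if_neg h, if_pos (show β i < β (i + 1) by omega), if_neg]
      intro h'
      have := DFunLike.congr_fun h' i
      rw [sw_left] at this
      omega
  by_cases h2 : β = sw i a
  · subst h2
    rw [hT3]
    unfold up
    rw [sw_left, sw_right, sw_sw]
    by_cases h : a (i + 1) ≤ a i
    · rw [if_pos h]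
      by_cases h' : a (i + 1) < a i
      · simp [h']
      · exfalso
        apply h1
        apply ext_at i
        · rw [sw_left]; omega
        · rw [sw_right]; omega
        · intro j hj hj'; rw [sw_of_ne _ hj hj']
    · rw [if_neg h, if_neg (show ¬ a (i + 1) < a i by omega), if_neg]
      exact fun h => h1 h.symm
  · rw [if_neg]
    · by_contra hne
      obtain ⟨k, hk1, hk2, rfl⟩ := hT1 β hne
      rcases (nsq_pt hi a hk1 hk2).2 hab with h | h
      · rw [h, pt_self] at h1; exact h1 rfl
      · rw [h, pt_sw] at h2; exact h2 rfl
    · unfold up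
      split_ifs
      · rintro rfl
        rw [sw_sw] at h2; exact h2 rfl
      · exact fun h => h1 h.symm

lemma X_sub_ne (i : ℕ) : (X i - X (i + 1) : MvPolynomial ℕ ℤ) ≠ 0 := by
  rw [sub_ne_zero]
  intro h
  have := X_injective (R := ℤ) h
  omega

/-- The effect of one Demazure operator on supports. -/
lemma step {n i : ℕ} (hi : i + 1 < n) (f g : MvPolynomial ℕ ℤ)
    (h : (X i - X (i + 1)) * g = X i * f - rename (Equiv.swap i (i + 1)) (X i * f)) :
    (∀ d, coeff d g ≠ 0 → ∃ a, coeff a f ≠ 0 ∧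
      ∃ k, min (a i) (a (i + 1)) ≤ k ∧ k ≤ max (a i) (a (i + 1)) ∧
        d = pt i a (a i + a (i + 1)) k) ∧
    ∀ β, (∀ a, coeff a f ≠ 0 → nsq n a ≤ nsq n β) → coeff β g = coeff (up i β) f := by
  choose T hT0 hT1 hT2 hT3 using exists_T i
  have hg : g = ∑ a ∈ f.support, C (coeff a f) * T a := by
    apply mul_left_cancel₀ (X_sub_ne i)
    rw [h, Finset.mul_sum]
    conv_lhs => rw [f.as_sum]
    rw [Finset.mul_sum, map_sum, ← Finset.sum_sub_distrib]
    refine Finset.sum_congr rfl fun a _ => ?_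
    have e : (monomial a (coeff a f) : MvPolynomial ℕ ℤ) = C (coeff a f) * monomial a 1 := by
      rw [C_mul_monomial, mul_one]
    rw [e, mul_left_comm (X i - X (i + 1)), hT0, mul_left_comm (X i), map_mul, rename_C]
    ring
  constructor
  · intro d hd
    rw [hg, coeff_sum] at hd
    obtain ⟨a, ha, hne⟩ := Finset.exists_ne_zero_of_sum_ne_zero hd
    rw [coeff_C_mul] at hne
    exact ⟨a, mem_support_iff.1 ha, hT1 a d (right_ne_zero_of_mul hne)⟩
  · intro β hβ
    rw [hg, coeff_sum]
    have : ∀ a ∈ f.support, coeff β (C (coeff a f) * T a) =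
        if a = up i β then coeff a f else 0 := by
      intro a ha
      rw [coeff_C_mul, coeff_T hi a β (hβ a (mem_support_iff.1 ha)) (hT1 a) (hT2 a) (hT3 a)]
      simp
    rw [Finset.sum_congr rfl this, Finset.sum_ite_eq']
    split_ifs with hs
    · rfl
    · exact (notMem_support_iff.1 hs).symm

lemma cnt_sw_le (i : ℕ) (a : ℕ →₀ ℕ) (j : ℕ) {m : ℕ} (hm : m ≤ i) :
    cnt (sw i a) j m = cnt a j m := by
  induction m with
  | zero => simp [cnt]
  | succ m ih =>
    rw [cnt_succ, cnt_succ, ih (by omega), sw_of_ne _ (by omega) (by omega)]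

lemma cnt_sw_mid (i : ℕ) (a : ℕ →₀ ℕ) (j : ℕ) :
    cnt (sw i a) j (i + 1) = cnt a j i + if j < a (i + 1) then 1 else 0 := by
  rw [cnt_succ, cnt_sw_le _ _ _ le_rfl, sw_left]

lemma cnt_sw_ge (i : ℕ) (a : ℕ →₀ ℕ) (j : ℕ) {m : ℕ} (hm : i + 2 ≤ m) :
    cnt (sw i a) j m = cnt a j m := by
  induction m, hm using Nat.le_induction with
  | base =>
    rw [cnt_succ, cnt_sw_mid, sw_right, cnt_succ, cnt_succ]
    omega
  | succ m hm ih =>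
    rw [cnt_succ, cnt_succ, ih, sw_of_ne _ (by omega) (by omega)]

lemma cnt_up_ne (i : ℕ) (a : ℕ →₀ ℕ) (j : ℕ) {m : ℕ} (hm : m ≠ i + 1) :
    cnt (up i a) j m = cnt a j m := by
  unfold up
  split_ifs
  · rcases Nat.lt_or_ge i m with h | h
    · exact cnt_sw_ge _ _ _ (by omega)
    · exact cnt_sw_le _ _ _ h
  · rfl

lemma cnt_up_mid (i : ℕ) (a : ℕ →₀ ℕ) (j : ℕ) :
    cnt (up i a) j (i + 1) = cnt a j i + if j < max (a i) (a (i + 1)) then 1 else 0 := by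
  unfold up
  split_ifs with h1 h2 h2
  · rw [cnt_sw_mid, if_pos (by omega)]
  · rw [cnt_sw_mid, if_neg (by omega)]
  · rw [cnt_succ, if_pos (by omega)]
  · rw [cnt_succ, if_neg (by omega)]

lemma supp_sw {n i : ℕ} (hi : i + 1 < n) {a : ℕ →₀ ℕ} (ha : ∀ k, n ≤ k → a k = 0) (k : ℕ)
    (hk : n ≤ k) : sw i a k = 0 := by
  rw [sw_of_ne _ (by omega) (by omega), ha k hk]

lemma supp_up_iff {n i : ℕ} (hi : i + 1 < n) {a : ℕ →₀ ℕ} :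
    (∀ k, n ≤ k → up i a k = 0) ↔ (∀ k, n ≤ k → a k = 0) := by
  unfold up
  split_ifs
  · constructor
    · intro h
      rw [← sw_sw i a]
      exact supp_sw hi h
    · exact fun h => supp_sw hi h
  · rfl

lemma Qs_up {n i : ℕ} (hi : i + 1 < n) {α β : ℕ →₀ ℕ} (hα : α i < α (i + 1)) :
    Qs n α β ↔ Qs n (sw i α) (up i β) := by
  have hu : sw i α = up i α := by unfold up; rw [if_pos hα]
  unfold Qs
  rw [supp_up_iff hi, hu]
  have hmax : max (α i) (α (i + 1)) = α (i + 1) := by omega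
  refine and_congr_right fun _ => and_congr ?_ ?_
  · refine forall_congr' fun j => ?_
    constructor
    · intro h m
      by_cases hm : m = i + 1
      · subst hm
        rw [cnt_up_mid, cnt_up_mid, hmax]
        have h0 := h i
        have h2 := h (i + 2)
        simp only [cnt_succ] at h2
        split_ifs at * <;> omega
      · rw [cnt_up_ne _ _ _ hm, cnt_up_ne _ _ _ hm]
        exact h m
    · intro h m
      have h' : ∀ m, m ≠ i + 1 → cnt α j m ≤ cnt β j m := by
        intro m hm
        have := h m
        rwa [cnt_up_ne _ _ _ hm, cnt_up_ne _ _ _ hm] at this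
      by_cases hm : m = i + 1
      · subst hm
        have h1 := h (i + 1)
        rw [cnt_up_mid, cnt_up_mid, hmax] at h1
        have h0 := h' i (by omega)
        have h2 := h' (i + 2) (by omega)
        simp only [cnt_succ] at h2 ⊢
        split_ifs at * <;> omega
      · exact h' m hm
  · refine forall_congr' fun j => ?_
    rw [cnt_up_ne _ _ _ (by omega), cnt_up_ne _ _ _ (by omega)]

lemma Qs_up_of {n i : ℕ} (hi : i + 1 < n) {α β : ℕ →₀ ℕ} (h : Qs n α β) : Qs n α (up i β) := by
  refine ⟨(supp_up_iff hi).2 h.1, fun j m => ?_, fun j => ?_⟩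
  · by_cases hm : m = i + 1
    · subst hm
      have := h.2.1 j (i + 1)
      rw [cnt_succ _ _ i, cnt_succ _ _ i] at this
      rw [cnt_up_mid, cnt_succ]
      split_ifs at * <;> omega
    · rw [cnt_up_ne _ _ _ hm]
      exact h.2.1 j m
  · rw [cnt_up_ne _ _ _ (by omega)]
    exact h.2.2 j

lemma up_sw (i : ℕ) (a : ℕ →₀ ℕ) : up i (sw i a) = up i a := by
  unfold up
  rw [sw_left, sw_right, sw_sw]
  split_ifs with h1 h2 h2
  · omega
  · rfl
  · rfl
  · apply ext_at i
    · rw [sw_left]; omega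
    · rw [sw_right]; omega
    · intro j hj hj'; rw [sw_of_ne _ hj hj']

lemma Qs_nsq {n : ℕ} {α β : ℕ →₀ ℕ} (h : Qs n α β) : nsq n β = nsq n α := by
  obtain ⟨N, hN⟩ : ∃ N, ∀ k < n, α k ≤ N ∧ β k ≤ N := by
    refine ⟨∑ k ∈ Finset.range n, (α k + β k), fun k hk => ?_⟩
    have := Finset.single_le_sum (f := fun k => α k + β k) (fun _ _ => Nat.zero_le _)
      (Finset.mem_range.2 hk)
    omega
  have odd : ∀ b, ∑ j ∈ Finset.range b, (2 * j + 1) = b ^ 2 := by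
    intro b
    induction b with
    | zero => rfl
    | succ b ih => rw [Finset.sum_range_succ, ih]; ring
  have key : ∀ a : ℕ →₀ ℕ, (∀ k < n, a k ≤ N) →
      nsq n a = ∑ j ∈ Finset.range N, (2 * j + 1) * cnt a j n := by
    intro a ha
    unfold nsq cnt
    have : ∀ j, (2 * j + 1) * Nat.count (fun k => j < a k) n =
        ∑ k ∈ Finset.range n, if j < a k then 2 * j + 1 else 0 := by
      intro j
      rw [Nat.count_eq_card_filter_range, ← Finset.sum_filter, Finset.sum_const, smul_eq_mul,
        mul_comm]
    simp only [this]
    rw [Finset.sum_comm]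
    refine Finset.sum_congr rfl fun k hk => ?_
    rw [← Finset.sum_filter, ← odd]
    congr 1
    ext j
    have := ha k (Finset.mem_range.1 hk)
    simp only [Finset.mem_filter, Finset.mem_range]
    omega
  rw [key α fun k hk => (hN k hk).1, key β fun k hk => (hN k hk).2]
  refine Finset.sum_congr rfl fun j _ => ?_
  rw [h.2.2 j]

lemma Qs_antitone {n : ℕ} {α β : ℕ →₀ ℕ} (hα : ∀ k, n ≤ k → α k = 0)
    (hanti : ∀ i j : ℕ, i ≤ j → α j ≤ α i) (h : Qs n α β) : β = α := by
  have hle : ∀ k, α k ≤ β k := by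
    intro k
    by_contra hk
    push Not at hk
    have h1 := h.2.1 (β k) (k + 1)
    have h2 : cnt α (β k) (k + 1) = k + 1 := by
      unfold cnt
      rw [Nat.count_iff_forall]
      intro m hm
      exact lt_of_lt_of_le hk (hanti m k (by omega))
    rw [cnt_succ β] at h1
    simp only [lt_irrefl, if_false] at h1
    have h3 : cnt β (β k) k ≤ k := Nat.count_le _
    omega
  have hs := Qs_nsq h
  unfold nsq at hs
  have := (Finset.sum_eq_sum_iff_of_le (s := Finset.range n) (f := fun k => α k ^ 2)
    (g := fun k => β k ^ 2) (fun k _ => Nat.pow_le_pow_left (hle k) 2)).1 hs.symm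
  ext k
  by_cases hk : k < n
  · have := this k (Finset.mem_range.2 hk)
    exact (Nat.pow_left_injective (n := 2) (by norm_num) this).symm
  · rw [hα k (by omega), h.1 k (by omega)]

lemma vec_pt_mem (i : ℕ) (a : ℕ →₀ ℕ) {k : ℕ}
    (h1 : min (a i) (a (i + 1)) ≤ k) (h2 : k ≤ max (a i) (a (i + 1))) :
    vec (pt i a (a i + a (i + 1)) k) ∈ segment ℝ (vec a) (vec (sw i a)) := by
  by_cases heq : a i = a (i + 1)
  · have : k = a i := by omega
    rw [this, pt_self]
    exact left_mem_segment _ _ _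
  have hne : (a i : ℝ) - a (i + 1) ≠ 0 := by
    rw [sub_ne_zero]; exact_mod_cast heq
  have hr : ((a i + a (i + 1) - k : ℕ) : ℝ) = a i + a (i + 1) - k := by
    rw [Nat.cast_sub (by omega)]; push_cast; ring
  refine ⟨(k - a (i + 1)) / (a i - a (i + 1)), (a i - k) / (a i - a (i + 1)), ?_, ?_, ?_, ?_⟩
  · rcases le_total (a i) (a (i + 1)) with h | h
    · apply div_nonneg_of_nonpos <;> rw [sub_nonpos] <;> norm_cast; omega
    · apply div_nonneg <;> rw [sub_nonneg] <;> norm_cast; omega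
  · rcases le_total (a i) (a (i + 1)) with h | h
    · apply div_nonneg_of_nonpos <;> rw [sub_nonpos] <;> norm_cast; omega
    · apply div_nonneg <;> rw [sub_nonneg] <;> norm_cast; omega
  · field_simp; ring
  · ext j
    simp only [Pi.add_apply, Pi.smul_apply, smul_eq_mul, vec]
    by_cases h : j = i
    · subst h
      rw [sw_left, pt_left]
      field_simp; ring
    · by_cases h' : j = i + 1
      · subst h'
        rw [sw_right, pt_right, hr]
        field_simp; ring
      · rw [sw_of_ne _ h h', pt_of_ne _ _ _ h h']
        field_simp; ring

/-- The swap as a linear map on real vectors. -/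
def swLin (i : ℕ) : (ℕ → ℝ) →ₗ[ℝ] (ℕ → ℝ) := LinearMap.funLeft ℝ ℝ (Equiv.swap i (i + 1))

lemma swLin_vec (i : ℕ) (a : ℕ →₀ ℕ) : swLin i (vec a) = vec (sw i a) := by
  ext j
  simp [swLin, LinearMap.funLeft, vec, sw, Finsupp.equivMapDomain_apply]

/-- Weight used for the induction. -/
def wt (n : ℕ) (a : ℕ →₀ ℕ) : ℕ := ∑ k ∈ Finset.range n, k * a k

lemma wt_sw {n i : ℕ} (hi : i + 1 < n) {a : ℕ →₀ ℕ} (h : a i < a (i + 1)) :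
    wt n (sw i a) < wt n a := by
  have split : ∀ b : ℕ →₀ ℕ, wt n b = ∑ k ∈ Finset.range n \ {i, i + 1}, k * b k +
      (i * b i + (i + 1) * b (i + 1)) := by
    intro b
    unfold wt
    rw [← Finset.sum_sdiff (s₁ := {i, i + 1}) (s₂ := Finset.range n)]
    · rw [Finset.sum_pair (by omega)]
    · intro k hk
      simp only [Finset.mem_insert, Finset.mem_singleton, Finset.mem_range] at hk ⊢
      omega
  rw [split, split a]
  have : ∑ k ∈ Finset.range n \ {i, i + 1}, k * sw i a k =
      ∑ k ∈ Finset.range n \ {i, i + 1}, k * a k := by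
    refine Finset.sum_congr rfl fun k hk => ?_
    simp only [Finset.mem_sdiff, Finset.mem_insert, Finset.mem_singleton, not_or] at hk
    rw [sw_of_ne _ hk.2.1 hk.2.2]
  rw [this, sw_left, sw_right]
  nlinarith

lemma key_main (Key : (ℕ →₀ ℕ) → MvPolynomial ℕ ℤ)
    (hbase : ∀ α : ℕ →₀ ℕ, (∀ i j : ℕ, i ≤ j → α j ≤ α i) → Key α = monomial α 1)
    (hrec : ∀ (α : ℕ →₀ ℕ) (i : ℕ), α i < α (i + 1) →
      (X i - X (i + 1)) * Key α =
        X i * Key (Finsupp.equivMapDomain (Equiv.swap i (i + 1)) α) -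
          rename (Equiv.swap i (i + 1))
            (X i * Key (Finsupp.equivMapDomain (Equiv.swap i (i + 1)) α)))
    (n : ℕ) (w : ℕ) : ∀ α : ℕ →₀ ℕ, wt n α = w → (∀ k, n ≤ k → α k = 0) →
      (∀ d, coeff d (Key α) ≠ 0 → nsq n d ≤ nsq n α) ∧
      (∀ d, coeff d (Key α) ≠ 0 → vec d ∈ convexHull ℝ (vec '' {β | Qs n α β})) ∧
      (∀ β, Qs n α β → coeff β (Key α) ≠ 0) := by
  induction w using Nat.strong_induction_on with
  | _ w ih =>
  intro α hw hα
  by_cases hanti : ∃ i, α i < α (i + 1)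
  · obtain ⟨i, hi⟩ := hanti
    have hin : i + 1 < n := by
      by_contra h
      have := hα (i + 1) (by omega)
      omega
    obtain ⟨I1, I2, I3⟩ := ih (wt n (sw i α)) (hw ▸ wt_sw hin hi) (sw i α) rfl (supp_sw hin hα)
    obtain ⟨S1, S2⟩ := step hin (Key (sw i α)) (Key α) (hrec α i hi)
    refine ⟨?_, ?_, ?_⟩
    · intro d hd
      obtain ⟨a, ha, k, h1, h2, rfl⟩ := S1 d hd
      rw [← nsq_sw hin α]
      exact ((nsq_pt hin a h1 h2).1).trans (I1 a ha)
    · intro d hd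
      obtain ⟨a, ha, k, h1, h2, rfl⟩ := S1 d hd
      have ha' := I2 a ha
      have c1 : vec a ∈ convexHull ℝ (vec '' {β | Qs n α β}) := by
        refine convexHull_mono (Set.image_mono ?_) ha'
        intro β hβ
        exact (Qs_up hin hi).2 (Qs_up_of hin hβ)
      have c2 : vec (sw i a) ∈ convexHull ℝ (vec '' {β | Qs n α β}) := by
        rw [← swLin_vec]
        have := Set.mem_image_of_mem (swLin i) ha'
        rw [LinearMap.image_convexHull] at this
        refine convexHull_mono ?_ this
        rintro _ ⟨_, ⟨β, hβ, rfl⟩, rfl⟩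
        rw [swLin_vec]
        refine ⟨sw i β, (Qs_up hin hi).2 ?_, rfl⟩
        rw [up_sw]
        exact Qs_up_of hin hβ
      exact (convex_convexHull ℝ _).segment_subset c1 c2 (vec_pt_mem i a h1 h2)
    · intro β hβ
      rw [S2 β]
      · exact I3 _ ((Qs_up hin hi).1 hβ)
      · intro a ha
        rw [Qs_nsq hβ, ← nsq_sw hin α]
        exact I1 a ha
  · push Not at hanti
    have hanti' : ∀ i j : ℕ, i ≤ j → α j ≤ α i := antitone_nat_of_succ_le hanti
    have hQ : Qs n α α := ⟨hα, fun _ _ => le_rfl, fun _ => rfl⟩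
    have hd : ∀ d, coeff d (Key α) ≠ 0 → d = α := by
      intro d hd
      rw [hbase α hanti', coeff_monomial] at hd
      by_contra h
      exact hd (if_neg fun h' => h h'.symm)
    refine ⟨?_, ?_, ?_⟩
    · intro d h; rw [hd d h]
    · intro d h
      rw [hd d h]
      exact subset_convexHull _ _ ⟨α, hQ, rfl⟩
    · intro β hβ
      rw [Qs_antitone hα hanti' hβ, hbase α hanti', coeff_monomial, if_pos rfl]
      exact one_ne_zero

/-- The Newton polytope of the key polynomial `κ_α` equals the Minkowski sum of Schubert
matroid polytopes `Σ_{j=1}^n P(SM_n(D(α)_j))`, where `D(α)_j = {i ≤ n : α_i ≥ j}` are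
the columns of the skyline diagram of `α` (`0`-indexed below: column `j` is
`{i < n : α_{i+1} ≥ j+1}`). -/
theorem stmt13 (Key : (ℕ →₀ ℕ) → MvPolynomial ℕ ℤ)
    -- If `α` is weakly decreasing then `κ_α = x_1^{α_1} x_2^{α_2} ⋯` (variables are
    -- `0`-indexed: the variable `X i` is `x_{i+1}` and `α i` is `α_{i+1}`).
    (hbase : ∀ α : ℕ →₀ ℕ, (∀ i j : ℕ, i ≤ j → α j ≤ α i) → Key α = monomial α 1)
    -- If `α i < α (i+1)` then `κ_α = ∂_i (x_i κ_α̂)` where `α̂` swaps entries `i`, `i+1`: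
    -- `(xᵢ - xᵢ₊₁) ⬝ κ_α = xᵢ κ_α̂ - sᵢ ⬝ (xᵢ κ_α̂)`.
    (hrec : ∀ (α : ℕ →₀ ℕ) (i : ℕ), α i < α (i + 1) →
      (X i - X (i + 1)) * Key α =
        X i * Key (Finsupp.equivMapDomain (Equiv.swap i (i + 1)) α) -
          rename (Equiv.swap i (i + 1))
            (X i * Key (Finsupp.equivMapDomain (Equiv.swap i (i + 1)) α)))
    (α : ℕ →₀ ℕ)
    -- `l = max{i : α_i ≠ 0}` (`1`-indexed), i.e. `l` is least with `α_i = 0` for all `i ≥ l`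
    (l n : ℕ) (hl₁ : ∀ i, α i ≠ 0 → i < l) (hl₂ : ∀ m, (∀ i, α i ≠ 0 → i < m) → l ≤ m)
    -- `n = max{l, α_1, …, α_l}`
    (hn : n = max l (α.support.sup α))
    :
    newtonPolytopeNat (Key α) =
      ∑ j ∈ Finset.range n,
        smPolytopeNat n ((Finset.range n).filter fun i => j + 1 ≤ α i) := by
  have hα : ∀ k, n ≤ k → α k = 0 := by
    intro k hk
    by_contra h
    have := hl₁ k h
    have : l ≤ n := hn ▸ le_max_left _ _
    omega
  have hαn : ∀ k, α k ≤ n := by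
    intro k
    by_cases h : α k = 0
    · omega
    · have h1 : α k ≤ α.support.sup α :=
        Finset.le_sup (f := fun k => α k) (Finsupp.mem_support_iff.2 h)
      exact h1.trans (hn ▸ le_max_right _ _)
  obtain ⟨_, I2, I3⟩ := key_main Key hbase hrec n _ α rfl hα
  refine Eq.trans ?_ (minkowski hα hαn)
  apply subset_antisymm
  · refine convexHull_min ?_ (convex_convexHull ℝ _)
    rintro _ ⟨d, hd, rfl⟩
    exact I2 d (mem_support_iff.1 hd)
  · refine convexHull_mono ?_
    rintro _ ⟨β, hβ, rfl⟩
    exact ⟨β, mem_support_iff.2 (I3 β hβ), rfl⟩
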